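/- Let n, k ≥ 1, let P be a 2n×2n complex matrix that is skew ♭-Hermitian (J_n⁻¹P†J_n = −P), and let D be a 2n×2k complex matrix with ♭-conjugate D♭ = J_k⁻¹D†J_n. For s ∈ ℂ such that sI − P is invertible, the matrix (−s̄)I − P is also invertible, and the function M(s) := D♭(sI−P)⁻¹D satisfies the symmetry M~(s) := J_k⁻¹M(−s̄)†J_k = −M(s). -/

import Mathlib

open Matrix Complex

/-- `Jmat k` is the `2k×2k` block-diagonal complex matrix with `k` copies of `diag(i, −i)`
on the diagonal. -/
noncomputable def Jmat (k : ℕ) : Matrix (Fin (2 * k)) (Fin (2 * k)) ℂ :=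
  Matrix.diagonal fun i => if i.val % 2 = 0 then Complex.I else -Complex.I

/-!
`♭` is an anti-involution as soon as its defining matrices `J` are invertible and satisfy
`J† = ε J` with a common scalar `ε`. Applied to `M(z) = D♭(zI − P)⁻¹D` it therefore returns the
transfer matrix of the system `(P♭, D)` at `z̄`. If `P♭ = −P`, taking `z = −s̄` turns
`(zI − P)♭` into `−(sI − P)`, which gives both the invertibility and the sign.
-/

theorem nonsing_inv_neg {R n : Type*} [CommRing R] [Fintype n] [DecidableEq n]
    (A : Matrix n n R) : (-A)⁻¹ = -A⁻¹ := by
  have inv_neg_one : (-1 : Matrix n n R)⁻¹ = -1 := inv_eq_left_inv (by rw [neg_mul_neg, mul_one])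
  rw [← neg_one_mul, Matrix.mul_inv_rev, inv_neg_one, mul_neg_one]

section FlatConj

variable {R m n : Type*} [CommRing R] [StarRing R] [Fintype m] [DecidableEq m]
  [Fintype n] [DecidableEq n]

/-- The `♭`-conjugate `A♭ = K⁻¹ A† J` of a rectangular matrix `A`, relative to square matrices `J`
and `K` indexed by its rows and its columns. For invertible `K` it is the adjoint of `A` for the
sesquilinear forms `x† K y` and `x† J y`. The paper's `♭` on `2m×2n` matrices is the case
`J = Jmat m`, `K = Jmat n`. -/
noncomputable def flatConj (J : Matrix m m R) (K : Matrix n n R) (A : Matrix m n R) :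
    Matrix n m R :=
  K⁻¹ * Aᴴ * J

theorem flatConj_mul {l : Type*} [Fintype l] (J : Matrix l l R) {K : Matrix m m R}
    (L : Matrix n n R) (hK : IsUnit K.det) (A : Matrix l m R) (B : Matrix m n R) :
    flatConj J L (A * B) = flatConj K L B * flatConj J K A := by
  simp only [flatConj, conjTranspose_mul, Matrix.mul_assoc, mul_nonsing_inv_cancel_left _ _ hK]

theorem flatConj_flatConj {J : Matrix m m R} {K : Matrix n n R} {ε : R}
    (hJ : IsUnit J.det) (hK : IsUnit K.det) (hJε : Jᴴ = ε • J) (hKε : Kᴴ = ε • K)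
    (A : Matrix m n R) :
    flatConj K J (flatConj J K A) = A := by
  have hK' : IsUnit Kᴴ.det := by simpa only [det_conjTranspose] using hK.star
  calc flatConj K J (flatConj J K A)
      = J⁻¹ * Jᴴ * A * ((Kᴴ)⁻¹ * K) := by
        simp only [flatConj, conjTranspose_mul, conjTranspose_conjTranspose,
          conjTranspose_nonsing_inv, Matrix.mul_assoc]
    _ = A * ((Kᴴ)⁻¹ * (ε • K)) := by
        rw [hJε, Matrix.mul_smul, nonsing_inv_mul _ hJ, smul_mul, Matrix.one_mul, smul_mul,
          Matrix.mul_smul, Matrix.mul_smul]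
    _ = A := by rw [← hKε, nonsing_inv_mul _ hK', Matrix.mul_one]

theorem flatConj_inv {J : Matrix n n R} (hJ : IsUnit J.det) (A : Matrix n n R) :
    flatConj J J A⁻¹ = (flatConj J J A)⁻¹ := by
  simp only [flatConj, Matrix.mul_inv_rev, nonsing_inv_nonsing_inv _ hJ,
    conjTranspose_nonsing_inv, Matrix.mul_assoc]

theorem isUnit_flatConj_iff {J : Matrix n n R} (hJ : IsUnit J.det) {A : Matrix n n R} :
    IsUnit (flatConj J J A) ↔ IsUnit A := by
  rw [flatConj, isUnit_iff_isUnit_det, det_conj' ((isUnit_iff_isUnit_det J).2 hJ),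
    det_conjTranspose, isUnit_star, isUnit_iff_isUnit_det]

theorem flatConj_smul_one_sub {J : Matrix n n R} (hJ : IsUnit J.det) (P : Matrix n n R) (z : R) :
    flatConj J J (z • 1 - P) = star z • 1 - flatConj J J P := by
  simp only [flatConj, conjTranspose_sub, conjTranspose_smul, conjTranspose_one, Matrix.mul_sub,
    Matrix.sub_mul, Matrix.mul_smul, smul_mul, Matrix.mul_one, nonsing_inv_mul _ hJ]

/-- The transfer matrix `M(z) = D♭(zI − P)⁻¹D` of the system with internal Hamiltonian matrix `P`
and coupling matrix `D`; it is meaningful only where `zI − P` is invertible. -/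
noncomputable def transferMatrix (J : Matrix n n R) (K : Matrix m m R) (P : Matrix n n R)
    (D : Matrix n m R) (z : R) : Matrix m m R :=
  flatConj J K D * (z • 1 - P)⁻¹ * D

theorem transferMatrix_neg_neg (J : Matrix n n R) (K : Matrix m m R) (P : Matrix n n R)
    (D : Matrix n m R) (z : R) :
    transferMatrix J K (-P) D (-z) = -transferMatrix J K P D z := by
  have sub_neg_eq_neg_sub : (-z) • 1 - -P = -(z • 1 - P) := by
    rw [neg_smul, neg_sub_neg, neg_sub]
  rw [transferMatrix, transferMatrix, sub_neg_eq_neg_sub, nonsing_inv_neg, Matrix.mul_neg,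
    Matrix.neg_mul]

theorem flatConj_transferMatrix {J : Matrix n n R} {K : Matrix m m R} {ε : R}
    (hJ : IsUnit J.det) (hK : IsUnit K.det) (hJε : Jᴴ = ε • J) (hKε : Kᴴ = ε • K)
    (P : Matrix n n R) (D : Matrix n m R) (z : R) :
    flatConj K K (transferMatrix J K P D z) =
      transferMatrix J K (flatConj J J P) D (star z) := by
  rw [transferMatrix, transferMatrix, flatConj_mul K K hJ, flatConj_mul K J hJ,
    flatConj_flatConj hJ hK hJε hKε, flatConj_inv hJ, flatConj_smul_one_sub hJ, Matrix.mul_assoc]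

theorem isUnit_neg_star_smul_one_sub_iff {J P : Matrix n n R} (hJ : IsUnit J.det)
    (hP : flatConj J J P = -P) {s : R} :
    IsUnit ((-star s) • 1 - P) ↔ IsUnit (s • 1 - P) := by
  rw [← isUnit_flatConj_iff hJ, flatConj_smul_one_sub hJ, hP, star_neg, star_star, neg_smul,
    neg_sub_neg, ← neg_sub, IsUnit.neg_iff]

theorem M_sim_eq_neg_M_general {J P : Matrix n n R} {K : Matrix m m R} {ε : R}
    (hJ : IsUnit J.det) (hK : IsUnit K.det) (hJε : Jᴴ = ε • J) (hKε : Kᴴ = ε • K)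
    (hP : flatConj J J P = -P) (D : Matrix n m R) {s : R} (hs : IsUnit (s • 1 - P)) :
    IsUnit ((-star s) • 1 - P) ∧
      flatConj K K (transferMatrix J K P D (-star s)) = -transferMatrix J K P D s := by
  refine ⟨(isUnit_neg_star_smul_one_sub_iff hJ hP).2 hs, ?_⟩
  rw [flatConj_transferMatrix hJ hK hJε hKε, hP, star_neg, star_star, transferMatrix_neg_neg]

end FlatConj

theorem isUnit_det_Jmat (k : ℕ) : IsUnit (Jmat k).det := by
  rw [Jmat, det_diagonal, isUnit_iff_ne_zero, Finset.prod_ne_zero_iff]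
  intro i _
  split_ifs <;> simp

theorem conjTranspose_Jmat (k : ℕ) : (Jmat k)ᴴ = (-1 : ℂ) • Jmat k := by
  rw [Jmat, diagonal_conjTranspose, neg_one_smul, diagonal_neg, diagonal_eq_diagonal_iff]
  intro i
  rw [Pi.star_apply]
  split_ifs <;> simp

/-- Symmetry of the system transfer matrix `M(s) = D♭(sI−P)⁻¹D`: if `P` is skew
♭-Hermitian and `sI − P` is invertible, then `(−s̄)I − P` is invertible and
`M~(s) := J_k⁻¹ M(−s̄)† J_k = −M(s)`, where `D♭ = J_k⁻¹ D† J_n`. -/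
theorem M_sim_eq_neg_M (n k : ℕ) (hn : 1 ≤ n) (hk : 1 ≤ k)
    (P : Matrix (Fin (2 * n)) (Fin (2 * n)) ℂ)
    (hP : (Jmat n)⁻¹ * Pᴴ * Jmat n = -P)
    (D : Matrix (Fin (2 * n)) (Fin (2 * k)) ℂ)
    (s : ℂ) (hs : IsUnit (s • (1 : Matrix (Fin (2 * n)) (Fin (2 * n)) ℂ) - P)) :
    IsUnit ((-(starRingEnd ℂ s)) • (1 : Matrix (Fin (2 * n)) (Fin (2 * n)) ℂ) - P) ∧
      (Jmat k)⁻¹ *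
          (((Jmat k)⁻¹ * Dᴴ * Jmat n) *
              ((-(starRingEnd ℂ s)) • (1 : Matrix (Fin (2 * n)) (Fin (2 * n)) ℂ) - P)⁻¹ * D)ᴴ *
          Jmat k =
        -(((Jmat k)⁻¹ * Dᴴ * Jmat n) *
            (s • (1 : Matrix (Fin (2 * n)) (Fin (2 * n)) ℂ) - P)⁻¹ * D) :=
  M_sim_eq_neg_M_general (isUnit_det_Jmat n) (isUnit_det_Jmat k) (conjTranspose_Jmat n)
    (conjTranspose_Jmat k) hP D hs
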